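/- arXiv:2410.09878 — 2 statements merged into one kernel-verified Lean document; each statement's English description precedes it below -/
import Mathlib

section
/- Let n be a positive integer and 1 ≤ k ≤ n. Let z̲, z̃ : {1, ..., n} → ℝ satisfy z̲_i ≤ z̃_i for all i, let τ̲ be the k-th smallest value of z̲_1, ..., z̲_n, and let τ̃ be the k-th smallest value of z̃_1, ..., z̃_n. Let Y be a finite set and let s̃, s̄ : Y → ℝ satisfy s̃(y) ≤ s̄(y) for all y ∈ Y. If C ⊆ Y is such that s̄(y) < τ̲ for every y ∉ C, then {y ∈ Y : s̃(y) ≥ τ̃} ⊆ C. -/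
/-- The `k`-th smallest value (k-th order statistic) of the tuple `z`:
the `k`-th entry of its nondecreasing rearrangement. -/
noncomputable def kthSmallest {n : ℕ} (z : Fin n → ℝ) (k : ℕ) : ℝ :=
  (List.insertionSort (· ≤ ·) (List.ofFn z)).getD (k - 1) 0

/-! The `k`-th smallest value is at most `x` exactly when at least `k` entries are at most `x`.
Raising the entries can only lower these counts, so order statistics are monotone in the tuple,
and a class that misses the lower-bound threshold also misses the poisoned one. -/

theorem insertionSort_ofFn {α : Type*} [LinearOrder α] {n : ℕ} (f : Fin n → α) :
    (List.ofFn f).insertionSort (· ≤ ·) = List.ofFn (f ∘ Tuple.sort f) :=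
  ((List.perm_insertionSort _ _).trans ((Tuple.sort f).ofFn_comp_perm f).symm).eq_of_pairwise'
    (List.pairwise_insertionSort _ _) (Tuple.monotone_sort f).sortedLE_ofFn.pairwise

section

variable {n k : ℕ}

theorem kthSmallest_succ (z : Fin n → ℝ) (j : Fin n) :
    kthSmallest z (j + 1) = z (Tuple.sort z j) := by
  simp [kthSmallest, insertionSort_ofFn]

theorem kthSmallest_le_iff (hk1 : 1 ≤ k) (hkn : k ≤ n) (z : Fin n → ℝ) (x : ℝ) :
    kthSmallest z k ≤ x ↔ k ≤ Finset.card {i | z i ≤ x} := by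
  obtain ⟨j, rfl⟩ : ∃ j : Fin n, k = j + 1 := ⟨⟨k - 1, by lia⟩, by grind⟩
  have card_sorted :
      Finset.card {i | (z ∘ Tuple.sort z) i ≤ x} = Finset.card {i | z i ≤ x} :=
    Finset.card_equiv (Tuple.sort z) (by simp)
  calc kthSmallest z (j + 1) ≤ x
      ↔ (z ∘ Tuple.sort z) j ≤ x := by rw [kthSmallest_succ, Function.comp_apply]
    _ ↔ j < Finset.card {i | (z ∘ Tuple.sort z) i ≤ x} :=
      (Tuple.lt_card_le_iff_apply_le_of_monotone (Tuple.monotone_sort z)).symm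
    _ ↔ j + 1 ≤ Finset.card {i | z i ≤ x} := by rw [card_sorted, Nat.succ_le_iff]

theorem kthSmallest_mono (hk1 : 1 ≤ k) (hkn : k ≤ n) {z w : Fin n → ℝ} (hzw : z ≤ w) :
    kthSmallest z k ≤ kthSmallest w k := by
  rw [kthSmallest_le_iff hk1 hkn]
  calc k ≤ Finset.card {i | w i ≤ kthSmallest w k} := (kthSmallest_le_iff hk1 hkn w _).mp le_rfl
    _ ≤ Finset.card {i | z i ≤ kthSmallest w k} :=
      Finset.card_le_card (Finset.monotone_filter_right _ fun i _ => (hzw i).trans)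

end

theorem size_reliability_scores_general {n k : ℕ} (hk1 : 1 ≤ k) (hkn : k ≤ n)
    {zl zt : Fin n → ℝ} (hz : ∀ i, zl i ≤ zt i)
    {Y : Type*} {st su : Y → ℝ} (hs : ∀ y, st y ≤ su y)
    {C : Set Y} (hC : ∀ y ∉ C, su y < kthSmallest zl k) :
    {y : Y | kthSmallest zt k ≤ st y} ⊆ C := by
  intro y hy
  by_contra hyC
  refine lt_irrefl (su y) ?_
  calc su y < kthSmallest zl k := hC y hyC
    _ ≤ kthSmallest zt k := kthSmallest_mono hk1 hkn hz
    _ ≤ st y := hy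
    _ ≤ su y := hs y

/-- Size reliability (Theorem 3, second half): if the poisoned calibration scores `zt`
are lower bounded by `zl`, the poisoned test scores `st` are upper bounded by `su`, and
every class outside `C` satisfies `su y < τ̲` for the quantile `τ̲` of the lower bounds,
then the poisoned prediction set `{y : st y ≥ τ̃}` is contained in `C`. -/
theorem size_reliability_scores (n : ℕ) (hn : 0 < n) (k : ℕ) (hk1 : 1 ≤ k) (hkn : k ≤ n)
    (zl zt : Fin n → ℝ) (hz : ∀ i, zl i ≤ zt i)
    {Y : Type*} [Fintype Y]
    (st su : Y → ℝ) (hs : ∀ y, st y ≤ su y)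
    (C : Set Y) (hC : ∀ y ∉ C, su y < kthSmallest zl k) :
    {y : Y | kthSmallest zt k ≤ st y} ⊆ C :=
  size_reliability_scores_general hk1 hkn hz hs hC
end

section
/- Let Y be a finite set, let k and τ̂ be natural numbers with τ̂ < k, let r be a natural number, and let C_1, ..., C_k and C̃_1, ..., C̃_k be subsets of Y with |{i : C̃_i ≠ C_i}| ≤ r. Define the majority sets C^M = {y ∈ Y : |{i : y ∈ C_i}| > τ̂} and C̃^M = {y ∈ Y : |{i : y ∈ C̃_i}| > τ̂}. If max_{y ∉ C^M} |{i : y ∈ C_i}| + r ≤ τ̂ (with the convention that the condition holds vacuously if C^M = Y), then C̃^M ⊆ C^M; that is, no class can be added to the majority prediction set. -/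
section SetValued

variable {ι Y : Type*} {C Ct : ι → Set Y} {τ r : ℕ∞}

/-- The support of the class `y` in a family `C` of prediction sets: how many of them contain `y`.
It takes values in `ℕ∞` so that it is meaningful for families of any size. -/
noncomputable def voteCount (C : ι → Set Y) (y : Y) : ℕ∞ :=
  {i | y ∈ C i}.encard

/-- The majority prediction set of the family `C`, with strict threshold `τ`. -/
def majoritySet (C : ι → Set Y) (τ : ℕ∞) : Set Y :=
  {y | τ < voteCount C y}

theorem voteCount_le_voteCount_add (C Ct : ι → Set Y) (y : Y) :
    voteCount Ct y ≤ voteCount C y + {i | ¬ Ct i ⊆ C i}.encard := by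
  have hcover : {i | y ∈ Ct i} ⊆ {i | y ∈ C i} ∪ {i | ¬ Ct i ⊆ C i} := fun i hi =>
    or_iff_not_imp_right.mpr fun hsub => not_not.mp hsub hi
  exact (Set.encard_le_encard hcover).trans (Set.encard_union_le _ _)

theorem majoritySet_subset_setOf_lt_voteCount_add (h : {i | ¬ Ct i ⊆ C i}.encard ≤ r) :
    majoritySet Ct τ ⊆ {y | τ < voteCount C y + r} := fun y hy =>
  calc
    τ < voteCount Ct y := hy
    _ ≤ voteCount C y + {i | ¬ Ct i ⊆ C i}.encard := voteCount_le_voteCount_add C Ct y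
    _ ≤ voteCount C y + r := by gcongr

theorem majority_size_reliability_general (hdiff : {i | ¬ Ct i ⊆ C i}.encard ≤ r)
    (hmax : ∀ y ∉ majoritySet C τ, voteCount C y + r ≤ τ) :
    majoritySet Ct τ ⊆ majoritySet C τ := fun y hy =>
  not_imp_comm.mp (hmax y) (majoritySet_subset_setOf_lt_voteCount_add hdiff hy).not_ge

end SetValued

section FinsetValued

variable {ι Y : Type*} [Fintype ι] [DecidableEq Y]

theorem voteCount_coe (C : ι → Finset Y) (y : Y) :
    voteCount (fun i => (C i : Set Y)) y = (Finset.univ.filter (fun i => y ∈ C i)).card := by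
  simp only [voteCount, Finset.mem_coe, ← Set.encard_coe_eq_coe_finsetCard,
    Finset.coe_filter_univ]

theorem coe_filter_lt_card [Fintype Y] (C : ι → Finset Y) (τ : ℕ) :
    (Finset.univ.filter (fun y => τ < (Finset.univ.filter (fun i => y ∈ C i)).card) : Set Y) =
      majoritySet (fun i => (C i : Set Y)) τ := by
  simp only [majoritySet, voteCount_coe, Nat.cast_lt, Finset.coe_filter_univ]

theorem encard_not_coe_subset_le (C Ct : ι → Finset Y) :
    {i | ¬ (Ct i : Set Y) ⊆ C i}.encard ≤ (Finset.univ.filter (fun i => Ct i ≠ C i)).card := by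
  rw [← Set.encard_coe_eq_coe_finsetCard, Finset.coe_filter_univ]
  exact Set.encard_le_encard fun i hnot hsame => hnot (Finset.coe_subset.mpr hsame.subset)

end FinsetValued

/-- Size reliability of majority prediction sets (Theorem 4, second half): if an
adversary alters at most `r` of the `k` individual prediction sets and for every class
outside the majority set the support plus `r` is still at most the threshold `τ`
(vacuously if the majority set is all of `Y`), then no class can be added to the
majority set. -/
theorem majority_size_reliability {Y : Type*} [Fintype Y] [DecidableEq Y]
    (k τ : ℕ) (hτ : τ < k) (r : ℕ)
    (C Ct : Fin k → Finset Y)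
    (hdiff : (Finset.univ.filter (fun i => Ct i ≠ C i)).card ≤ r)
    (CM CtM : Finset Y)
    (hCM : CM = Finset.univ.filter
      (fun y => τ < (Finset.univ.filter (fun i => y ∈ C i)).card))
    (hCtM : CtM = Finset.univ.filter
      (fun y => τ < (Finset.univ.filter (fun i => y ∈ Ct i)).card))
    (hmax : ∀ y : Y, y ∉ CM → (Finset.univ.filter (fun i => y ∈ C i)).card + r ≤ τ) :
    CtM ⊆ CM := by
  rw [← Finset.coe_subset, hCM, hCtM, coe_filter_lt_card, coe_filter_lt_card]
  refine majority_size_reliability_general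
    ((encard_not_coe_subset_le C Ct).trans (Nat.cast_le.mpr hdiff)) fun y hy => ?_
  rw [voteCount_coe]
  exact_mod_cast hmax y (by rwa [hCM, ← Finset.mem_coe, coe_filter_lt_card])
end
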